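/- arXiv:2303.01721 — 2 statements merged into one kernel-verified Lean document; each statement's English description precedes it below -/
import Mathlib

section
/- Let 𝒞 ⊆ ℤ_m^n be a linear (n, m^k, d) (𝕡,π)-code and let I be an ideal of 𝕡 with full count. Then 𝒞 is an I-perfect (𝕡,π)-code if and only if the dual code 𝒞^⊥ is an I^c-perfect code with respect to the dual pomset 𝕡̃ (with the same labeling π). -/
open scoped Classical

noncomputable section

/-- Lee weight of an element of `ZMod m`. -/
def leeWt (m : ℕ) (a : ZMod m) : ℕ := min a.val (m - a.val)

/-- Block Lee weight of the `i`-th block of `u`. -/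
def blockWt (m s : ℕ) (π : Fin s → ℕ) (u : ∀ i : Fin s, Fin (π i) → ZMod m)
    (i : Fin s) : ℕ :=
  Finset.univ.sup fun t => leeWt m (u i t)

/-- The `(𝕡,π)`-weight of `u`. -/
def pomsetWt (m s : ℕ) (P : PartialOrder (Fin s)) (π : Fin s → ℕ)
    (u : ∀ i : Fin s, Fin (π i) → ZMod m) : ℕ :=
  ∑ i : Fin s,
    if ∃ j, j ≠ i ∧ P.le i j ∧ 0 < blockWt m s π u j then m / 2
    else blockWt m s π u i

/-- The pomset block distance. -/
def pomsetDist (m s : ℕ) (P : PartialOrder (Fin s)) (π : Fin s → ℕ)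
    (u v : ∀ i : Fin s, Fin (π i) → ZMod m) : ℕ :=
  pomsetWt m s P π (u - v)

/-- An ideal of the pomset `𝕡`, given by its count function `I : [s] → {0,…,⌊m/2⌋}`. -/
def IsIdeal (m s : ℕ) (P : PartialOrder (Fin s)) (I : Fin s → ℕ) : Prop :=
  (∀ a, I a ≤ m / 2) ∧ ∀ a b, 0 < I a → P.le b a → b ≠ a → I b = m / 2

/-- An ideal has full count if every element of its root set has count `⌊m/2⌋`. -/
def FullCount (m : ℕ) {s : ℕ} (I : Fin s → ℕ) : Prop :=
  ∀ a, 0 < I a → I a = m / 2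

/-- The cardinality `|I|` of an ideal. -/
def idealCard {s : ℕ} (I : Fin s → ℕ) : ℕ := ∑ a, I a

/-- The cardinality `|I*|` of the root set of an ideal. -/
def rootCard {s : ℕ} (I : Fin s → ℕ) : ℕ :=
  (Finset.univ.filter fun a => 0 < I a).card

/-- `Σ_{i ∈ I*} k_i`. -/
def rootSum {s : ℕ} (π I : Fin s → ℕ) : ℕ :=
  ∑ a ∈ Finset.univ.filter (fun a => 0 < I a), π a

/-- The `I`-ball centered at `u`. -/
def ballI (m s : ℕ) (π : Fin s → ℕ) (I : Fin s → ℕ)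
    (u : ∀ i : Fin s, Fin (π i) → ZMod m) :
    Set (∀ i : Fin s, Fin (π i) → ZMod m) :=
  {v | ∀ i, blockWt m s π (u - v) i ≤ I i}

/-- `𝒞` is `I`-perfect: the `I`-balls centered at codewords are pairwise
disjoint and cover the whole space. -/
def IPerfect (m s : ℕ) (π : Fin s → ℕ) (I : Fin s → ℕ)
    (C : Set (∀ i : Fin s, Fin (π i) → ZMod m)) : Prop :=
  (C.Pairwise fun c c' => Disjoint (ballI m s π I c) (ballI m s π I c')) ∧
  (⋃ c ∈ C, ballI m s π I c) = Set.univ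

/-- The `r`-ball centered at `u`. -/
def ballR (m s : ℕ) (P : PartialOrder (Fin s)) (π : Fin s → ℕ) (r : ℕ)
    (u : ∀ i : Fin s, Fin (π i) → ZMod m) :
    Set (∀ i : Fin s, Fin (π i) → ZMod m) :=
  {v | pomsetDist m s P π u v ≤ r}

/-- The standard dot product on `ℤ_m^n`. -/
def dotProd (m s : ℕ) (π : Fin s → ℕ)
    (c v : ∀ i : Fin s, Fin (π i) → ZMod m) : ZMod m :=
  ∑ i, ∑ t, c i t * v i t

/-- The dual code `𝒞^⊥`. -/
def dualCode (m s : ℕ) (π : Fin s → ℕ)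
    (C : Set (∀ i : Fin s, Fin (π i) → ZMod m)) :
    Set (∀ i : Fin s, Fin (π i) → ZMod m) :=
  {v | ∀ c ∈ C, dotProd m s π c v = 0}

/-- The dual pomset, encoded by the opposite partial order. -/
def dualOrder (s : ℕ) (P : PartialOrder (Fin s)) : PartialOrder (Fin s) where
  le a b := P.le b a
  lt a b := P.lt b a
  le_refl a := P.le_refl a
  le_trans a b c h1 h2 := P.le_trans _ _ _ h2 h1
  lt_iff_le_not_ge a b := P.lt_iff_le_not_ge b a
  le_antisymm a b h1 h2 := (P.le_antisymm _ _ h1 h2).symm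

/-- The minimum `(𝕡,π)`-distance of a code. -/
def minDist (m s : ℕ) (P : PartialOrder (Fin s)) (π : Fin s → ℕ)
    (C : Set (∀ i : Fin s, Fin (π i) → ZMod m)) : ℕ :=
  sInf {r | ∃ c ∈ C, ∃ c' ∈ C, c ≠ c' ∧ r = pomsetWt m s P π (c - c')}

/-- `𝒞` is an MDS `(𝕡,π)`-code: it attains the Singleton bound
`n − ⌈log_m K⌉ ≥ max { Σ_{i∈I*} k_i : I ideal, |I*| = ⌊(d−1)/⌊m/2⌋⌋ }`. -/
def IsMDS (m s : ℕ) (P : PartialOrder (Fin s)) (π : Fin s → ℕ)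
    (C : Set (∀ i : Fin s, Fin (π i) → ZMod m)) : Prop :=
  (∀ I, IsIdeal m s P I →
      rootCard I = (minDist m s P π C - 1) / (m / 2) →
      rootSum π I ≤ (∑ i, π i) - Nat.clog m (Nat.card ↥C)) ∧
  (∃ I, IsIdeal m s P I ∧
      rootCard I = (minDist m s P π C - 1) / (m / 2) ∧
      rootSum π I = (∑ i, π i) - Nat.clog m (Nat.card ↥C))

/-- The chain pomset on `[s]`: the usual total order on `Fin s`. -/
def chainOrder (s : ℕ) : PartialOrder (Fin s) := inferInstance

theorem sep_aux (m : ℕ) [NeZero m] (M : Type*) [AddCommGroup M] [Module (ZMod m) M] [Finite M]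
    (x : M) (hx : x ≠ 0) : ∃ f : M →ₗ[ZMod m] ZMod m, f x ≠ 0 := by
  have h0 : HasEnoughRootsOfUnity (Multiplicative (ZMod m)) m := by
    refine ⟨⟨Multiplicative.ofAdd 1, ?_⟩, ?_⟩
    · rw [IsPrimitiveRoot.iff_orderOf, orderOf_ofAdd_eq_addOrderOf, ZMod.addOrderOf_one]
    · have : IsCyclic (Multiplicative (ZMod m))ˣ :=
        (toUnits (G := Multiplicative (ZMod m))).isCyclic.mp inferInstance
      infer_instance
  have h1 : Monoid.exponent (Multiplicative M) ∣ m := by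
    apply Monoid.exponent_dvd_of_forall_pow_eq_one
    intro g
    rw [← ofAdd_toAdd g, ← ofAdd_nsmul, ← Nat.cast_smul_eq_nsmul (ZMod m)]
    simp
  have h2 := HasEnoughRootsOfUnity.of_dvd (Multiplicative (ZMod m)) h1
  obtain ⟨φ, hφ⟩ := CommGroup.exists_apply_ne_one_of_hasEnoughRootsOfUnity (Multiplicative M)
    (Multiplicative (ZMod m)) (a := Multiplicative.ofAdd x) (by simpa using hx)
  let ψ : M →+ ZMod m := MonoidHom.toAdditive ((Units.coeHom _).comp φ)
  refine ⟨ψ.toZModLinearMap m, fun h => hφ ?_⟩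
  apply Units.ext
  exact h

theorem leeWt_le (m : ℕ) (a : ZMod m) : leeWt m a ≤ m / 2 := by
  unfold leeWt; omega

theorem leeWt_eq_zero (m : ℕ) [NeZero m] (a : ZMod m) : leeWt m a = 0 ↔ a = 0 := by
  have := ZMod.val_lt a
  rw [← ZMod.val_eq_zero]
  unfold leeWt; omega

/-- Vectors supported on the root set of `J`. -/
def suppSub (m s : ℕ) (π J : Fin s → ℕ) : Submodule (ZMod m) (∀ i : Fin s, Fin (π i) → ZMod m) where
  carrier := {v | ∀ i, J i = 0 → v i = 0}
  add_mem' {a b} ha hb i hi := by simp [ha i hi, hb i hi]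
  zero_mem' i _ := rfl
  smul_mem' r a ha i hi := by simp [ha i hi]

theorem mem_ballI_iff (m s : ℕ) [NeZero m] (π J : Fin s → ℕ)
    (hJ : ∀ a, J a = 0 ∨ J a = m / 2) (u v : ∀ i : Fin s, Fin (π i) → ZMod m) :
    v ∈ ballI m s π J u ↔ u - v ∈ suppSub m s π J := by
  change (∀ i, blockWt m s π (u - v) i ≤ J i) ↔ (∀ i, J i = 0 → (u - v) i = 0)
  refine forall_congr' fun i => ?_
  unfold blockWt
  rw [Finset.sup_le_iff]
  constructor
  · intro h hi
    ext t
    have := h t (Finset.mem_univ t)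
    rw [hi, Nat.le_zero, leeWt_eq_zero] at this
    exact this
  · intro h t _
    rcases hJ i with h0 | h0
    · rw [h h0, h0, Nat.le_zero, leeWt_eq_zero]; rfl
    · rw [h0]; exact leeWt_le _ _

theorem perfect_iff (m s : ℕ) [NeZero m] (π J : Fin s → ℕ)
    (hJ : ∀ a, J a = 0 ∨ J a = m / 2) (D : Submodule (ZMod m) (∀ i : Fin s, Fin (π i) → ZMod m)) :
    IPerfect m s π J (D : Set (∀ i : Fin s, Fin (π i) → ZMod m)) ↔ IsCompl (suppSub m s π J) D := by
  rw [isCompl_iff, Submodule.disjoint_def, codisjoint_iff, Submodule.eq_top_iff']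
  unfold IPerfect
  refine and_congr ⟨fun h x hxV hxD => ?_, fun h c hc c' hc' hne => ?_⟩
    ⟨fun h x => ?_, fun h => ?_⟩
  · by_contra hne
    have h1 : Disjoint (ballI m s π J x) (ballI m s π J 0) := h hxD D.zero_mem hne
    have h2 := Set.disjoint_left.mp h1
    refine @h2 0 ?_ ?_
    · rw [mem_ballI_iff m s π J hJ]; simpa using hxV
    · rw [mem_ballI_iff m s π J hJ]; simp
  · change Disjoint (ballI m s π J c) (ballI m s π J c')
    rw [Set.disjoint_left]
    intro a ha ha'
    rw [mem_ballI_iff m s π J hJ] at ha ha'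
    apply hne
    rw [← sub_eq_zero]
    refine h _ ?_ (D.sub_mem hc hc')
    have := (suppSub m s π J).sub_mem ha ha'
    simpa using this
  · have hx : x ∈ ⋃ c ∈ (D : Set (∀ i : Fin s, Fin (π i) → ZMod m)), ballI m s π J c := by rw [h]; trivial
    simp only [Set.mem_iUnion] at hx
    obtain ⟨c, hc, hx⟩ := hx
    rw [mem_ballI_iff m s π J hJ] at hx
    rw [Submodule.mem_sup]
    exact ⟨x - c, by rw [← neg_sub]; exact Submodule.neg_mem _ hx, c, hc, by abel⟩
  · rw [Set.eq_univ_iff_forall]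
    intro x
    obtain ⟨y, hy, c, hc, rfl⟩ := Submodule.mem_sup.mp (h x)
    simp only [Set.mem_iUnion]
    refine ⟨c, hc, ?_⟩
    rw [mem_ballI_iff m s π J hJ]
    have : c - (y + c) = -y := by abel
    rw [this]
    exact Submodule.neg_mem _ hy

theorem dotProd_comm (m s : ℕ) (π : Fin s → ℕ) (u v : ∀ i : Fin s, Fin (π i) → ZMod m) :
    dotProd m s π u v = dotProd m s π v u := by
  simp [dotProd, mul_comm]

/-- The dot product with a fixed vector as a linear map. -/
def dotL (m s : ℕ) (π : Fin s → ℕ) (u : ∀ i : Fin s, Fin (π i) → ZMod m) : (∀ i : Fin s, Fin (π i) → ZMod m) →ₗ[ZMod m] ZMod m where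
  toFun v := dotProd m s π u v
  map_add' a b := by simp [dotProd, mul_add, Finset.sum_add_distrib]
  map_smul' r a := by simp [dotProd, Finset.mul_sum, mul_left_comm]

/-- The dual code as a submodule. -/
def dualSub (m s : ℕ) (π : Fin s → ℕ) (C : Submodule (ZMod m) (∀ i : Fin s, Fin (π i) → ZMod m)) :
    Submodule (ZMod m) (∀ i : Fin s, Fin (π i) → ZMod m) where
  carrier := dualCode m s π C
  add_mem' {a b} ha hb c hc := by
    have := (dotL m s π c).map_add a b
    have h1 := ha c hc
    have h2 := hb c hc
    change dotProd m s π c (a + b) = dotProd m s π c a + dotProd m s π c b at this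
    rw [this, h1, h2, add_zero]
  zero_mem' c _ := (dotL m s π c).map_zero
  smul_mem' r a ha c hc := by
    have := (dotL m s π c).map_smul r a
    change dotProd m s π c (r • a) = r • dotProd m s π c a at this
    rw [this, ha c hc, smul_zero]

theorem mem_dualSub (m s : ℕ) (π : Fin s → ℕ) (C : Submodule (ZMod m) (∀ i : Fin s, Fin (π i) → ZMod m)) (v : ∀ i : Fin s, Fin (π i) → ZMod m) :
    v ∈ dualSub m s π C ↔ ∀ c ∈ C, dotProd m s π c v = 0 := Iff.rfl

theorem dotProd_single (m s : ℕ) (π : Fin s → ℕ) (v : ∀ i : Fin s, Fin (π i) → ZMod m) (i : Fin s) (t : Fin (π i)) :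
    dotProd m s π (Pi.single i (Pi.single t 1)) v = v i t := by
  unfold dotProd
  rw [Finset.sum_eq_single i, Finset.sum_eq_single t]
  · simp
  · intro b _ hb; simp [hb]
  · simp
  · intro b _ hb; simp [hb]
  · simp

theorem riesz (m s : ℕ) (π : Fin s → ℕ) (f : (∀ i : Fin s, Fin (π i) → ZMod m) →ₗ[ZMod m] ZMod m) :
    ∃ u : ∀ i : Fin s, Fin (π i) → ZMod m, ∀ x, f x = dotProd m s π x u := by
  refine ⟨fun i t => f (Pi.single i (Pi.single t 1)), fun x => ?_⟩
  rw [dotProd_comm]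
  change f x = dotL m s π _ x
  congr 1
  apply LinearMap.pi_ext'
  intro i
  apply LinearMap.pi_ext'
  intro t
  apply LinearMap.ext_ring
  change f (Pi.single i (Pi.single t 1)) = dotProd m s π _ (Pi.single i (Pi.single t 1))
  rw [dotProd_comm, dotProd_single]

theorem dualSub_dualSub (m s : ℕ) [NeZero m] (π : Fin s → ℕ) (C : Submodule (ZMod m) (∀ i : Fin s, Fin (π i) → ZMod m)) :
    dualSub m s π (dualSub m s π C) = C := by
  apply le_antisymm
  · intro x hx
    by_contra hxC
    obtain ⟨f, hf⟩ := sep_aux m ((∀ i : Fin s, Fin (π i) → ZMod m) ⧸ C) (C.mkQ x) (by simpa using hxC)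
    obtain ⟨u, hu⟩ := riesz m s π (f ∘ₗ C.mkQ)
    apply hf
    have h1 : u ∈ dualSub m s π C := by
      intro c hc
      rw [← hu]
      have : C.mkQ c = 0 := by simpa using hc
      simp only [LinearMap.comp_apply, this, map_zero]
    have := hx u h1
    rw [dotProd_comm, ← hu] at this
    exact this
  · intro x hx u hu
    rw [dotProd_comm]
    exact hu x hx

theorem forward (m s : ℕ) [NeZero m] (hm : 0 < m / 2) (π J : Fin s → ℕ)
    (hJ : ∀ a, J a = 0 ∨ J a = m / 2) (C : Submodule (ZMod m) (∀ i : Fin s, Fin (π i) → ZMod m))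
    (h : IsCompl (suppSub m s π J) C) :
    IsCompl (suppSub m s π (fun a => m / 2 - J a)) (dualSub m s π C) := by
  have key : ∀ x ∈ suppSub m s π J, ∀ y ∈ suppSub m s π (fun a => m / 2 - J a),
      dotProd m s π x y = 0 := by
    intro x hx y hy
    apply Finset.sum_eq_zero
    intro i _
    rcases hJ i with h0 | h0
    · simp [hx i h0]
    · have := hy i (by simp [h0])
      simp [this]
  rw [isCompl_iff, Submodule.disjoint_def, codisjoint_iff, Submodule.eq_top_iff']
  constructor
  · intro x hxV hxC
    have : ∀ y, dotProd m s π y x = 0 := by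
      intro y
      have hy : y ∈ suppSub m s π J ⊔ C := by rw [h.sup_eq_top]; trivial
      obtain ⟨v, hv, c, hc, rfl⟩ := Submodule.mem_sup.mp hy
      rw [dotProd_comm]
      change dotL m s π x (v + c) = 0
      rw [map_add]
      change dotProd m s π x v + dotProd m s π x c = 0
      rw [dotProd_comm, key v hv x hxV, dotProd_comm, hxC c hc, add_zero]
    ext i t
    rw [← dotProd_single m s π x i t, this]; rfl
  · intro w
    obtain ⟨u, hu⟩ := riesz m s π (dotL m s π w ∘ₗ (suppSub m s π J).projection C h)
    have huC : u ∈ dualSub m s π C := by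
      intro c hc
      rw [← hu, LinearMap.comp_apply, (Submodule.projection_apply_eq_zero_iff h).mpr hc, map_zero]
    rw [Submodule.mem_sup]
    refine ⟨w - u, ?_, u, huC, by abel⟩
    intro i hi
    have hi' : J i ≠ 0 := by
      intro h0; simp only [h0] at hi; omega
    ext t
    have hv : (Pi.single i (Pi.single t 1) : ∀ i : Fin s, Fin (π i) → ZMod m) ∈ suppSub m s π J := by
      intro j hj
      have : j ≠ i := by rintro rfl; exact hi' hj
      simp [this]
    have h2 := hu (Pi.single i (Pi.single t 1))
    rw [dotProd_single, LinearMap.comp_apply,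
      Submodule.projection_apply_left h ⟨_, hv⟩] at h2
    change dotProd m s π w (Pi.single i (Pi.single t 1)) = _ at h2
    rw [dotProd_comm, dotProd_single] at h2
    simp [h2]

/-- `𝒞` is `I`-perfect iff `𝒞^⊥` is `I^c`-perfect w.r.t. the dual pomset. -/
theorem I_perfect_duality
    (m s : ℕ) (hm : 4 ≤ m) (hs : 1 ≤ s)
    (P : PartialOrder (Fin s)) (π : Fin s → ℕ) (hπ : ∀ i, 0 < π i)
    (n k d : ℕ) (hn : n = ∑ i, π i)
    (C : Submodule (ZMod m) (∀ i : Fin s, Fin (π i) → ZMod m))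
    (hcard : Nat.card ↥C = m ^ k)
    (hd : IsLeast {r | ∃ c ∈ (C : Set (∀ i : Fin s, Fin (π i) → ZMod m)),
      ∃ c' ∈ (C : Set (∀ i : Fin s, Fin (π i) → ZMod m)), c ≠ c' ∧
        r = pomsetWt m s P π (c - c')} d)
    (I : Fin s → ℕ) (hI : IsIdeal m s P I) (hfull : FullCount m I) :
    IPerfect m s π I (C : Set (∀ i : Fin s, Fin (π i) → ZMod m)) ↔
      IPerfect m s π (fun a => m / 2 - I a)
        (dualCode m s π (C : Set (∀ i : Fin s, Fin (π i) → ZMod m))) := by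
  have : NeZero m := ⟨by omega⟩
  have hm2 : 0 < m / 2 := by omega
  have hJ : ∀ a, I a = 0 ∨ I a = m / 2 := fun a =>
    (Nat.eq_zero_or_pos (I a)).imp_right (hfull a)
  have hJ' : ∀ a, (fun a => m / 2 - I a) a = 0 ∨ (fun a => m / 2 - I a) a = m / 2 := by
    intro a
    rcases hJ a with h | h <;> simp [h]
  have e : dualCode m s π (C : Set (∀ i : Fin s, Fin (π i) → ZMod m)) =
    (dualSub m s π C : Set (∀ i : Fin s, Fin (π i) → ZMod m)) := rfl
  rw [e, perfect_iff m s π I hJ, perfect_iff m s π _ hJ']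
  refine ⟨forward m s hm2 π I hJ C, fun h => ?_⟩
  have h2 := forward m s hm2 π _ hJ' _ h
  rw [dualSub_dualSub] at h2
  have : (fun a => m / 2 - (fun a => m / 2 - I a) a) = I := by
    funext a
    have := hI.1 a
    simp only
    omega
  rwa [this] at h2

end
end

section
/- Suppose all blocks have the same dimension, k_1 = k_2 = … = k_s = t, and let 𝒞 ⊆ ℤ_m^n be a linear (n, m^k, d) (𝕡,π)-code with t dividing n − k. If 𝒞 is an (((n−k)/t)·l)-perfect (𝕡,π)-code, then 𝒞 is an MDS (𝕡,π)-code. -/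
open scoped Classical

noncomputable section

theorem exists_downset {α : Type*} [Fintype α] [PartialOrder α] (j : ℕ)
    (hj : j ≤ Fintype.card α) :
    ∃ J : Finset α, J.card = j ∧ ∀ a ∈ J, ∀ b, b ≤ a → b ∈ J := by
  induction j with
  | zero => exact ⟨∅, by simp, by simp⟩
  | succ j ih =>
    obtain ⟨J, hJ, hdown⟩ := ih (by omega)
    have hne : (Finset.univ \ J).Nonempty := by
      rw [← Finset.card_pos, Finset.card_sdiff_of_subset (Finset.subset_univ J),
        Finset.card_univ]
      omega
    obtain ⟨x, hx⟩ := (Finset.univ \ J).exists_minimal hne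
    have hxJ : x ∉ J := by simpa using hx.1
    refine ⟨insert x J, by rw [Finset.card_insert_of_notMem hxJ, hJ], ?_⟩
    intro a ha b hb
    rw [Finset.mem_insert] at ha ⊢
    rcases ha with rfl | ha
    · by_cases hbJ : b ∈ J
      · exact Or.inr hbJ
      · exact Or.inl (le_antisymm hb (hx.2 (by simpa using hbJ) hb))
    · exact Or.inr (hdown a ha b hb)

theorem leeWt_zero (m : ℕ) : leeWt m 0 = 0 := by
  simp [leeWt]

theorem blockWt_le (m s : ℕ) (π : Fin s → ℕ) (u : ∀ i : Fin s, Fin (π i) → ZMod m)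
    (i : Fin s) : blockWt m s π u i ≤ m / 2 := by
  unfold blockWt
  refine Finset.sup_le fun t _ => ?_
  unfold leeWt
  omega

theorem blockWt_eq_zero (m s : ℕ) (π : Fin s → ℕ) (u : ∀ i : Fin s, Fin (π i) → ZMod m)
    (i : Fin s) (h : u i = 0) : blockWt m s π u i = 0 := by
  simp [blockWt, h, leeWt_zero]

theorem pomsetWt_le_of_support (m s : ℕ) (P : PartialOrder (Fin s)) (π : Fin s → ℕ)
    (u : ∀ i : Fin s, Fin (π i) → ZMod m) (J : Finset (Fin s))
    (hJ : ∀ a ∈ J, ∀ b, P.le b a → b ∈ J) (hu : ∀ i, i ∉ J → u i = 0) :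
    pomsetWt m s P π u ≤ J.card * (m / 2) := by
  have h : ∀ i : Fin s, (if ∃ j, j ≠ i ∧ P.le i j ∧ 0 < blockWt m s π u j then m / 2
    else blockWt m s π u i) ≤ if i ∈ J then m / 2 else 0 := by
    intro i
    by_cases hi : i ∈ J
    · rw [if_pos hi]
      split_ifs
      · exact le_rfl
      · exact blockWt_le ..
    · rw [if_neg hi, if_neg]
      · exact (blockWt_eq_zero m s π u i (hu i hi)).le
      · rintro ⟨j, -, hij, hpos⟩
        have hj : j ∉ J := fun hj => hi (hJ j hj i hij)
        rw [blockWt_eq_zero m s π u j (hu j hj)] at hpos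
        exact absurd hpos (lt_irrefl _)
  unfold pomsetWt
  refine (Finset.sum_le_sum fun i _ => h i).trans ?_
  rw [← Finset.sum_filter]
  simp

/-- an `(((n−k)/t)·⌊m/2⌋)`-perfect linear code with all blocks of
dimension `t` is MDS. -/
theorem r_perfect_implies_mds
    (m s : ℕ) (hm : 4 ≤ m) (hs : 1 ≤ s)
    (P : PartialOrder (Fin s)) (π : Fin s → ℕ) (hπ : ∀ i, 0 < π i)
    (t : ℕ) (ht : ∀ i, π i = t)
    (n k d : ℕ) (hn : n = ∑ i, π i) (htnk : t ∣ (n - k))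
    (C : Submodule (ZMod m) (∀ i : Fin s, Fin (π i) → ZMod m))
    (hcard : Nat.card ↥C = m ^ k)
    (hd : IsLeast {r | ∃ c ∈ (C : Set (∀ i : Fin s, Fin (π i) → ZMod m)),
      ∃ c' ∈ (C : Set (∀ i : Fin s, Fin (π i) → ZMod m)), c ≠ c' ∧
        r = pomsetWt m s P π (c - c')} d)
    (hperf :
      ((C : Set (∀ i : Fin s, Fin (π i) → ZMod m)).Pairwise fun c c' =>
        Disjoint (ballR m s P π (((n - k) / t) * (m / 2)) c)
          (ballR m s P π (((n - k) / t) * (m / 2)) c')) ∧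
      (⋃ c ∈ (C : Set (∀ i : Fin s, Fin (π i) → ZMod m)),
        ballR m s P π (((n - k) / t) * (m / 2)) c) = Set.univ) :
    IsMDS m s P π (C : Set (∀ i : Fin s, Fin (π i) → ZMod m)) := by
  have hm0 : NeZero m := ⟨by omega⟩
  have hl : 0 < m / 2 := by omega
  have ht0 : 0 < t := by rw [← ht ⟨0, hs⟩]; exact hπ _
  have hns : n = s * t := by simp [hn, ht]
  obtain ⟨q, hq⟩ := htnk
  have hqd : (n - k) / t = q := by rw [hq]; exact Nat.mul_div_cancel_left _ ht0
  rw [hqd] at hperf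
  -- a projection bound
  have key : ∀ J : Finset (Fin s), (∀ a ∈ J, ∀ b, P.le b a → b ∈ J) →
      J.card * (m / 2) < d → k ≤ (s - J.card) * t := by
    intro J hJ hJd
    let f : C → (∀ i : {i : Fin s // i ∉ J}, Fin (π i) → ZMod m) := fun c i => c.1 i.1
    have hf : Function.Injective f := by
      intro c c' hcc
      by_contra hne
      have h1 := hd.2 ⟨c.1, c.2, c'.1, c'.2, fun h => hne (Subtype.ext h), rfl⟩
      have h2 := pomsetWt_le_of_support m s P π (c.1 - c'.1) J hJ (by
        intro i hi
        have := congrFun hcc ⟨i, hi⟩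
        simp only [f] at this
        simp [this])
      omega
    have h3 := Nat.card_le_card_of_injective f hf
    rw [hcard, Nat.card_eq_fintype_card] at h3
    simp only [Fintype.card_pi, ZMod.card, Finset.prod_const, Finset.card_univ,
      Fintype.card_fin, ht, Fintype.card_subtype_compl, Fintype.card_coe] at h3
    rw [← pow_mul] at h3
    have h4 := (Nat.pow_le_pow_iff_right (by omega : 1 < m)).1 h3
    rwa [mul_comm] at h4
  obtain ⟨c, hc, c', hc', hne, hdc⟩ := hd.1
  -- the distance exceeds the radius
  have hdr : q * (m / 2) < d := by
    by_contra hle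
    have hdis := hperf.1 hc hc' hne
    refine (Set.disjoint_left.1 hdis : ∀ ⦃a⦄, _) (?_ : c' ∈ _) ?_
    · change pomsetWt m s P π (c - c') ≤ _
      omega
    · change pomsetWt m s P π (c' - c') ≤ _
      have := pomsetWt_le_of_support m s P π (c' - c') ∅ (by simp) (by simp)
      simp only [Finset.card_empty, zero_mul] at this
      omega
  have hkn : k ≤ n := by
    have := key ∅ (by simp) (by simp only [Finset.card_empty, zero_mul]; omega)
    simpa [hns] using this
  have hds : d ≤ s * (m / 2) := by
    have := pomsetWt_le_of_support m s P π (c - c') Finset.univ (by simp) (by simp)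
    rw [Finset.card_univ, Fintype.card_fin] at this
    omega
  have hqs : q < s := lt_of_mul_lt_mul_right (hdr.trans_le hds) (Nat.zero_le _)
  have hds2 : d ≤ (q + 1) * (m / 2) := by
    by_contra hlt
    obtain ⟨J, hJc, hJ⟩ := @exists_downset (Fin s) _ P (q + 1) (by simpa using hqs)
    have h1 := key J hJ (by rw [hJc]; omega)
    rw [hJc] at h1
    have h2 : (s - (q + 1)) * t + (q + 1) * t = s * t := by
      rw [← add_mul]; congr 1; omega
    have h3 : (q + 1) * t = t * q + t := by ring
    omega
  have hfloor : (d - 1) / (m / 2) = q := by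
    rw [Nat.div_eq_iff hl]
    have : (q + 1) * (m / 2) = q * (m / 2) + m / 2 := by ring
    omega
  have hmin : minDist m s P π (C : Set (∀ i : Fin s, Fin (π i) → ZMod m)) = d :=
    hd.csInf_eq
  have hclog : Nat.clog m (Nat.card ↥C) = k := by
    rw [hcard]; exact Nat.clog_pow m k (by omega)
  have hbound : (∑ i, π i) - Nat.clog m
      (Nat.card ↥(C : Set (∀ i : Fin s, Fin (π i) → ZMod m))) = t * q := by
    rw [← hq, hn]
    congr 1
  have hroot : ∀ I : Fin s → ℕ, rootSum π I = t * rootCard I := by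
    intro I
    simp [rootSum, rootCard, ht, mul_comm]
  refine ⟨?_, ?_⟩
  · intro I _ hI
    rw [hbound, hroot, hI, hmin, hfloor]
  · obtain ⟨J, hJc, hJ⟩ := @exists_downset (Fin s) _ P q (by simpa using hqs.le)
    have hrc : rootCard (fun i => if i ∈ J then m / 2 else 0) = q := by
      rw [← hJc, rootCard]
      congr 1
      ext a
      by_cases ha : a ∈ J <;> simp [ha] <;> omega
    refine ⟨fun i => if i ∈ J then m / 2 else 0, ⟨?_, ?_⟩, ?_, ?_⟩
    · intro a
      by_cases ha : a ∈ J <;> simp [ha]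
    · intro a b ha hb _
      by_cases haJ : a ∈ J
      · simp [hJ a haJ b hb]
      · simp [haJ] at ha
    · rw [hrc, hmin, hfloor]
    · rw [hbound, hroot, hrc]

end
end
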